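/- Let Λ and Λ' be lattices in ℂ, both with complex multiplication by R, such that g₂(Λ), g₃(Λ), g₂(Λ'), g₃(Λ') are all algebraic over ℚ. Let α ∈ ℂ be nonzero and algebraic over ℚ with α·Λ ⊆ Λ'. Let M and M' be lattices in ℂ satisfying g₂(M) = σ(g₂(Λ)), g₃(M) = σ(g₃(Λ)), g₂(M') = σ(g₂(Λ')), g₃(M') = σ(g₃(Λ')). Then σ(α)·M ⊆ M'. -/

import Mathlib

open NumberField

/-- The Eisenstein series `g₂` of an additive subgroup of `ℂ`. -/
noncomputable def g₂ (Λ : AddSubgroup ℂ) : ℂ :=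
  60 * ∑' w : {w : ℂ // w ∈ Λ ∧ w ≠ 0}, ((w : ℂ) ^ 4)⁻¹

/-- The Eisenstein series `g₃` of an additive subgroup of `ℂ`. -/
noncomputable def g₃ (Λ : AddSubgroup ℂ) : ℂ :=
  140 * ∑' w : {w : ℂ // w ∈ Λ ∧ w ≠ 0}, ((w : ℂ) ^ 6)⁻¹

/-! The function `v = 1 / ℘` is holomorphic at `0` and satisfies
`v' ^ 2 = 4 v - g₂ v ^ 3 - g₃ v ^ 4`. Differentiating gives `v'' = G(v)` for a polynomial `G`, so
the Taylor series of `v` at `0` is computed from `g₂` and `g₃` by a recursion that makes sense over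
every field of characteristic zero and commutes with field homomorphisms.

For `α ≠ 0`, the inclusion `α Λ ⊆ Λ'` holds if and only if `v_Λ'(α z)` is a nonzero rational
function of `v_Λ(z)`. If `α Λ ⊆ Λ'`, then `℘_Λ'(α z)` is an even elliptic function for `Λ`, hence
rational in `℘_Λ(z)`. Conversely, a rational function of `v_Λ` has the same order at every point of
`Λ`, so the pole of `℘_Λ'(α z)` at `0` is repeated all over `Λ`, whereas the poles of `℘_Λ'` lie in
`Λ'`.

This criterion compares two power series with coefficients in any field `F` containing `g₂`, `g₃`
and `α`, and such a relation over `ℂ` already holds over `F`. It is therefore the same for every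
embedding of `F` into `ℂ`. -/

open Filter Topology Polynomial
open scoped PowerSeries PeriodPair

section FormalODE

open PowerSeries (coeff)

theorem coeff_aeval_congr {R : Type*} [CommRing R] {U V : R⟦X⟧} {n : ℕ}
    (h : ∀ k ≤ n, coeff k U = coeff k V) (G : R[X]) :
    coeff n (aeval U G) = coeff n (aeval V G) := by
  have hUV : (PowerSeries.X : R⟦X⟧) ^ (n + 1) ∣ U - V :=
    PowerSeries.X_pow_dvd_iff.mpr fun k hk ↦ by simp [h k (Nat.le_of_lt_succ hk)]
  have hG : U - V ∣ aeval U G - aeval V G := by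
    simpa only [eval_map_algebraMap] using sub_dvd_eval_sub U V (G.map (algebraMap R R⟦X⟧))
  exact sub_eq_zero.mp <| by
    simpa using PowerSeries.X_pow_dvd_iff.mp (hUV.trans hG) n n.lt_succ_self

theorem map_powerSeries_aeval {R S : Type*} [CommRing R] [CommRing S] (i : R →+* S) (V : R⟦X⟧)
    (G : R[X]) : PowerSeries.map i (aeval V G) = aeval (PowerSeries.map i V) (G.map i) :=
  map_aeval_eq_aeval_map (by ext; simp) G V

theorem map_derivative_powerSeries {R S : Type*} [CommRing R] [CommRing S] (i : R →+* S)
    (V : R⟦X⟧) :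
    PowerSeries.map i (PowerSeries.derivative R V) =
      PowerSeries.derivative S (PowerSeries.map i V) := by
  ext n
  simp [PowerSeries.coeff_derivative]

variable {F : Type*} [Field F]

/-- The coefficients of the power series `V` with `V'' = G(V)`, `V(0) = x₀` and `V'(0) = x₁`, by
recursion. The `n`-th coefficient of `G(V)` depends only on `V` modulo `X ^ (n + 1)`, so `V` is
truncated to make the recursion well-founded. -/
noncomputable def formalODECoeff (G : F[X]) (x₀ x₁ : F) : ℕ → F
  | 0 => x₀
  | 1 => x₁
  | n + 2 =>
    coeff n (aeval (PowerSeries.mk fun k ↦ if k ≤ n then formalODECoeff G x₀ x₁ k else 0) G) /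
      ((n + 1) * (n + 2))

/-- The power series `V` with `V'' = G(V)`, `V(0) = x₀` and `V'(0) = x₁`. -/
noncomputable def formalODESolution (G : F[X]) (x₀ x₁ : F) : F⟦X⟧ :=
  PowerSeries.mk (formalODECoeff G x₀ x₁)

theorem coeff_zero_formalODESolution (G : F[X]) (x₀ x₁ : F) :
    coeff 0 (formalODESolution G x₀ x₁) = x₀ := by
  rw [formalODESolution, PowerSeries.coeff_mk, formalODECoeff]

theorem coeff_one_formalODESolution (G : F[X]) (x₀ x₁ : F) :
    coeff 1 (formalODESolution G x₀ x₁) = x₁ := by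
  rw [formalODESolution, PowerSeries.coeff_mk, formalODECoeff]

/-- The quartic `Q` such that `v = 1 / ℘` satisfies `v' ^ 2 = Q(v)`. -/
noncomputable def invWeierstrassPQuartic (a b : F) : F[X] :=
  4 * X - C a * X ^ 3 - C b * X ^ 4

theorem map_invWeierstrassPQuartic {E : Type*} [Field E] (i : F →+* E) (a b : F) :
    (invWeierstrassPQuartic a b).map i = invWeierstrassPQuartic (i a) (i b) := by
  simp [invWeierstrassPQuartic]

/-- The Taylor series at `0` of `1 / ℘`, where `℘` has invariants `g₂ = a` and `g₃ = b`. -/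
noncomputable def invWeierstrassPSeries (a b : F) : F⟦X⟧ :=
  formalODESolution (C (1 / 2) * derivative (invWeierstrassPQuartic a b)) 0 0

variable [CharZero F]

theorem coeff_add_two_of_derivative_derivative_eq {V W : F⟦X⟧}
    (hV : PowerSeries.derivative F (PowerSeries.derivative F V) = W) (n : ℕ) :
    coeff (n + 2) V = coeff n W / ((n + 1) * (n + 2)) := by
  have h₁ : (n + 1 : F) ≠ 0 := n.cast_add_one_ne_zero
  have h₂ : (n + 2 : F) ≠ 0 := by exact_mod_cast (n + 1).succ_ne_zero
  rw [← hV, PowerSeries.coeff_derivative, PowerSeries.coeff_derivative]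
  push_cast
  field_simp
  ring

theorem derivative_derivative_formalODESolution (G : F[X]) (x₀ x₁ : F) :
    PowerSeries.derivative F (PowerSeries.derivative F (formalODESolution G x₀ x₁)) =
      aeval (formalODESolution G x₀ x₁) G := by
  ext n
  have h₁ : (n + 1 : F) ≠ 0 := n.cast_add_one_ne_zero
  have h₂ : (n + 2 : F) ≠ 0 := by exact_mod_cast (n + 1).succ_ne_zero
  have hcongr : coeff n (aeval (formalODESolution G x₀ x₁) G) =
      coeff n (aeval (PowerSeries.mk fun k ↦ if k ≤ n then formalODECoeff G x₀ x₁ k else 0) G) :=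
    coeff_aeval_congr (fun k hk ↦ by simp [formalODESolution, hk]) G
  rw [hcongr, PowerSeries.coeff_derivative, PowerSeries.coeff_derivative, formalODESolution,
    PowerSeries.coeff_mk, formalODECoeff]
  push_cast
  field_simp
  ring

theorem eq_formalODESolution {G : F[X]} {V : F⟦X⟧}
    (hV : PowerSeries.derivative F (PowerSeries.derivative F V) = aeval V G) :
    V = formalODESolution G (coeff 0 V) (coeff 1 V) := by
  ext n
  induction n using Nat.strong_induction_on with
  | _ n ih =>
    match n with
    | 0 => rw [coeff_zero_formalODESolution]
    | 1 => rw [coeff_one_formalODESolution]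
    | n + 2 =>
      rw [coeff_add_two_of_derivative_derivative_eq hV, coeff_add_two_of_derivative_derivative_eq
        (derivative_derivative_formalODESolution G (coeff 0 V) (coeff 1 V)),
        coeff_aeval_congr (fun k hk ↦ ih k (by lia)) G]

theorem map_formalODESolution {E : Type*} [Field E] (i : F →+* E) (G : F[X])
    (x₀ x₁ : F) :
    PowerSeries.map i (formalODESolution G x₀ x₁) = formalODESolution (G.map i) (i x₀) (i x₁) := by
  have := charZero_of_injective_ringHom i.injective
  have h := eq_formalODESolution (G := G.map i) (V := PowerSeries.map i (formalODESolution G x₀ x₁))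
    (by rw [← map_powerSeries_aeval, ← derivative_derivative_formalODESolution,
      map_derivative_powerSeries, map_derivative_powerSeries])
  rwa [PowerSeries.coeff_map, PowerSeries.coeff_map, coeff_zero_formalODESolution,
    coeff_one_formalODESolution] at h

theorem derivative_derivative_of_derivative_sq_eq {Q : F[X]} {V : F⟦X⟧}
    (hV₀ : PowerSeries.derivative F V ≠ 0)
    (hV : PowerSeries.derivative F V ^ 2 = aeval V Q) :
    PowerSeries.derivative F (PowerSeries.derivative F V) =
      aeval V (C (1 / 2) * derivative Q) := by
  have h := congrArg (PowerSeries.derivative F) hV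
  rw [Derivation.map_aeval, Derivation.leibniz_pow] at h
  have htwo : algebraMap F F⟦X⟧ (1 / 2) * 2 = 1 := by
    rw [← map_ofNat (algebraMap F F⟦X⟧) 2, ← map_mul]
    simp
  refine mul_right_cancel₀ hV₀ ?_
  simp only [smul_eq_mul, nsmul_eq_mul, Nat.cast_ofNat, Nat.add_one_sub_one, pow_one] at h
  rw [map_mul, aeval_C, mul_assoc, ← h]
  linear_combination
    -(PowerSeries.derivative F (PowerSeries.derivative F V)) * PowerSeries.derivative F V * htwo

theorem map_invWeierstrassPSeries {E : Type*} [Field E] (i : F →+* E) (a b : F) :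
    PowerSeries.map i (invWeierstrassPSeries a b) = invWeierstrassPSeries (i a) (i b) := by
  rw [invWeierstrassPSeries, map_formalODESolution, Polynomial.map_mul, map_C, ← derivative_map,
    map_invWeierstrassPQuartic, map_div₀, map_one, map_ofNat, map_zero, invWeierstrassPSeries]

theorem eq_invWeierstrassPSeries {a b : F} {V : F⟦X⟧} (hV₀ : V ≠ 0) (h₀ : coeff 0 V = 0)
    (hV : PowerSeries.derivative F V ^ 2 = aeval V (invWeierstrassPQuartic a b)) :
    V = invWeierstrassPSeries a b := by
  have hdV : PowerSeries.derivative F V ≠ 0 := fun h ↦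
    hV₀ (PowerSeries.derivative.ext (by simpa using h) (by simpa using h₀))
  have h₁ : coeff 1 V = 0 := by
    have h := congrArg PowerSeries.constantCoeff hV
    rw [PowerSeries.coeff_zero_eq_constantCoeff_apply] at h₀
    have hcoeff : PowerSeries.constantCoeff (PowerSeries.derivative F V) = coeff 1 V := by
      simp [← PowerSeries.coeff_zero_eq_constantCoeff_apply, PowerSeries.coeff_derivative]
    simpa [invWeierstrassPQuartic, h₀, hcoeff] using h
  have h := eq_formalODESolution (derivative_derivative_of_derivative_sq_eq hdV hV)
  rwa [h₀, h₁] at h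

end FormalODE

section Descent

/-- Over a field and for transcendental `V`, the series `W` is a nonzero element of `F(V)`. -/
def IsNonzeroRationalIn {R : Type*} [CommRing R] (V W : R⟦X⟧) : Prop :=
  ∃ A B : R[X], B ≠ 0 ∧ aeval V A * W = aeval V B

variable {F R : Type*} [Field F] [CommRing R]

theorem IsNonzeroRationalIn.map [Nontrivial R] (i : F →+* R) {V W : F⟦X⟧}
    (h : IsNonzeroRationalIn V W) :
    IsNonzeroRationalIn (PowerSeries.map i V) (PowerSeries.map i W) := by
  obtain ⟨A, B, hB, hAB⟩ := h
  refine ⟨A.map i, B.map i, (Polynomial.map_ne_zero_iff i.injective).mpr hB, ?_⟩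
  rw [← map_powerSeries_aeval, ← map_powerSeries_aeval, ← hAB, map_mul]

theorem dual_coeff_aeval_map_mul_map [Algebra F R] (φ : Module.Dual F R) (V W : F⟦X⟧) (A : R[X])
    (n : ℕ) :
    φ (PowerSeries.coeff n (aeval (PowerSeries.map (algebraMap F R) V) A *
      PowerSeries.map (algebraMap F R) W)) =
    PowerSeries.coeff n (aeval V (A.sum fun k a ↦ monomial k (φ a)) * W) := by
  have hmonomial (k : ℕ) (a : R) :
      φ (PowerSeries.coeff n (aeval (PowerSeries.map (algebraMap F R) V) (monomial k a) *
        PowerSeries.map (algebraMap F R) W)) =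
      PowerSeries.coeff n (aeval V (monomial k (φ a)) * W) := by
    rw [aeval_monomial, aeval_monomial, mul_assoc, mul_assoc, ← map_pow, ← map_mul,
      ← Algebra.smul_def, ← Algebra.smul_def, PowerSeries.coeff_smul, PowerSeries.coeff_smul,
      PowerSeries.coeff_map, smul_eq_mul, mul_comm, ← Algebra.smul_def, map_smul, smul_eq_mul,
      smul_eq_mul, mul_comm]
  conv_lhs => rw [← A.sum_monomial_eq]
  simp only [Polynomial.sum_def, map_sum, Finset.sum_mul, hmonomial]

-- Applying an `F`-linear functional to the coefficients of the polynomials turns a relation over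
-- `R` into one over `F`; it stays nontrivial if the functional does not kill a coefficient of `B`.
theorem IsNonzeroRationalIn.of_map (i : F →+* R) {V W : F⟦X⟧}
    (h : IsNonzeroRationalIn (PowerSeries.map i V) (PowerSeries.map i W)) :
    IsNonzeroRationalIn V W := by
  algebraize [i]
  obtain ⟨A, B, hB, hAB⟩ := h
  obtain ⟨k, hk⟩ : ∃ k, B.coeff k ≠ 0 := by
    contrapose! hB
    exact Polynomial.ext hB
  obtain ⟨φ, hφ⟩ : ∃ φ : Module.Dual F R, φ (B.coeff k) ≠ 0 := by
    contrapose! hk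
    exact (Module.forall_dual_apply_eq_zero_iff F _).mp hk
  refine ⟨A.sum fun k a ↦ monomial k (φ a), B.sum fun k a ↦ monomial k (φ a), ?_, ?_⟩
  · intro hφB
    apply hφ
    have := congrArg (fun p ↦ p.coeff k) hφB
    simpa [Polynomial.sum_def, finsetSum_coeff, coeff_monomial, hk] using this
  · ext n
    have hB' := dual_coeff_aeval_map_mul_map φ V 1 B n
    rw [map_one, mul_one, mul_one] at hB'
    rw [← dual_coeff_aeval_map_mul_map, ← hB']
    exact congrArg (fun P ↦ φ (PowerSeries.coeff n P)) hAB

end Descent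

section TaylorSeries

variable {𝕜 : Type*} [NontriviallyNormedField 𝕜]

/-- The Taylor series of `f` at `x`, as a formal power series. -/
noncomputable def taylorSeries (f : 𝕜 → 𝕜) (x : 𝕜) : 𝕜⟦X⟧ :=
  PowerSeries.mk fun n ↦ iteratedDeriv n f x / n.factorial

variable {f g : 𝕜 → 𝕜} {x : 𝕜}

theorem coeff_taylorSeries (f : 𝕜 → 𝕜) (x : 𝕜) (n : ℕ) :
    PowerSeries.coeff n (taylorSeries f x) = iteratedDeriv n f x / n.factorial :=
  PowerSeries.coeff_mk _ _

theorem taylorSeries_congr (h : f =ᶠ[𝓝 x] g) : taylorSeries f x = taylorSeries g x := by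
  ext n
  rw [coeff_taylorSeries, coeff_taylorSeries, h.iteratedDeriv_eq n]

theorem taylorSeries_const (c x : 𝕜) : taylorSeries (fun _ ↦ c) x = PowerSeries.C c := by
  ext n
  rw [coeff_taylorSeries, iteratedDeriv_const, PowerSeries.coeff_C]
  rcases n with _ | n <;> simp

theorem taylorSeries_comp_mul_left (f : 𝕜 → 𝕜) (c : 𝕜) :
    taylorSeries (fun z ↦ f (c * z)) 0 = PowerSeries.rescale c (taylorSeries f 0) := by
  have hderiv (n : ℕ) : iteratedDeriv n (fun z ↦ f (c * z)) =
      fun z ↦ c ^ n * iteratedDeriv n f (c * z) := by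
    induction n with
    | zero => simp
    | succ n ih =>
      funext z
      rw [iteratedDeriv_succ, ih, deriv_const_mul_field,
        deriv_comp_mul_left c (iteratedDeriv n f) z, iteratedDeriv_succ, smul_eq_mul]
      ring
  ext n
  rw [PowerSeries.coeff_rescale, coeff_taylorSeries, coeff_taylorSeries, hderiv]
  simp only [mul_zero, mul_div_assoc]

theorem taylorSeries_deriv [CharZero 𝕜] (f : 𝕜 → 𝕜) (x : 𝕜) :
    taylorSeries (deriv f) x = PowerSeries.derivative 𝕜 (taylorSeries f x) := by
  ext n
  have hn : (n + 1 : 𝕜) ≠ 0 := n.cast_add_one_ne_zero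
  rw [PowerSeries.coeff_derivative, coeff_taylorSeries, coeff_taylorSeries, ← iteratedDeriv_succ',
    Nat.factorial_succ]
  push_cast
  field_simp

theorem analyticAt_polynomial_eval (hf : AnalyticAt 𝕜 f x) (p : 𝕜[X]) :
    AnalyticAt 𝕜 (fun z ↦ p.eval (f z)) x := by
  simpa only [coe_aeval_eq_eval] using hf.aeval_polynomial p

variable [CompleteSpace 𝕜]

theorem taylorSeries_add (hf : AnalyticAt 𝕜 f x) (hg : AnalyticAt 𝕜 g x) :
    taylorSeries (fun z ↦ f z + g z) x = taylorSeries f x + taylorSeries g x := by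
  ext n
  rw [map_add, coeff_taylorSeries, coeff_taylorSeries, coeff_taylorSeries, ← add_div,
    iteratedDeriv_fun_add hf.contDiffAt hg.contDiffAt]

variable [CharZero 𝕜]

theorem taylorSeries_mul (hf : AnalyticAt 𝕜 f x) (hg : AnalyticAt 𝕜 g x) :
    taylorSeries (fun z ↦ f z * g z) x = taylorSeries f x * taylorSeries g x := by
  ext n
  rw [coeff_taylorSeries, iteratedDeriv_fun_mul hf.contDiffAt hg.contDiffAt,
    PowerSeries.coeff_mul, Finset.Nat.sum_antidiagonal_eq_sum_range_succ
      (fun i j ↦ PowerSeries.coeff i (taylorSeries f x) * PowerSeries.coeff j (taylorSeries g x)),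
    Finset.sum_div]
  refine Finset.sum_congr rfl fun i hi ↦ ?_
  rw [coeff_taylorSeries, coeff_taylorSeries,
    Nat.cast_choose 𝕜 (Finset.mem_range_succ_iff.mp hi)]
  have := fun k : ℕ ↦ Nat.cast_ne_zero (R := 𝕜).mpr k.factorial_ne_zero
  field_simp [this]

theorem taylorSeries_eval (hf : AnalyticAt 𝕜 f x) (A : 𝕜[X]) :
    taylorSeries (fun z ↦ A.eval (f z)) x = aeval (taylorSeries f x) A := by
  induction A using Polynomial.induction_on with
  | C a => simp [taylorSeries_const]
  | add p q hp hq =>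
    simp only [eval_add, map_add, taylorSeries_add (analyticAt_polynomial_eval hf p)
      (analyticAt_polynomial_eval hf q), hp, hq]
  | monomial n a h =>
    simp only [pow_succ, ← mul_assoc, eval_mul_X, map_mul, aeval_X] at h ⊢
    rw [taylorSeries_mul (analyticAt_polynomial_eval hf (C a * X ^ n)) hf, h]

theorem eventuallyEq_of_taylorSeries_eq (hf : AnalyticAt 𝕜 f x) (hg : AnalyticAt 𝕜 g x)
    (h : taylorSeries f x = taylorSeries g x) : f =ᶠ[𝓝 x] g := by
  have hseries : FormalMultilinearSeries.ofScalars 𝕜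
      (fun n ↦ iteratedDeriv n f x / (n.factorial : 𝕜)) =
      FormalMultilinearSeries.ofScalars 𝕜
      (fun n ↦ iteratedDeriv n g x / (n.factorial : 𝕜)) := by
    congr 1
    funext n
    rw [← coeff_taylorSeries, h, coeff_taylorSeries]
  have hsub := hf.hasFPowerSeriesAt.sub (hseries ▸ hg.hasFPowerSeriesAt)
  rw [sub_self] at hsub
  filter_upwards [hsub.eventually_eq_zero] with z hz using sub_eq_zero.mp hz

end TaylorSeries

section InvWeierstrassP

variable (L : PeriodPair)

theorem meromorphicOrderAt_inv_weierstrassP_zero : meromorphicOrderAt (℘[L])⁻¹ 0 = 2 := by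
  rw [meromorphicOrderAt_inv, L.order_weierstrassP 0 L.lattice.zero_mem]
  rfl

theorem analyticAt_inv_weierstrassP_zero : AnalyticAt ℂ (℘[L])⁻¹ 0 := by
  refine AnalyticAt.of_meromorphicOrderAt_pos ?_ (by simp)
  rw [meromorphicOrderAt_inv_weierstrassP_zero]
  exact two_pos

theorem eventually_weierstrassP_ne_zero : ∀ᶠ z in 𝓝[≠] 0, ℘[L] z ≠ 0 := by
  refine (meromorphicOrderAt_ne_top_iff_eventually_ne_zero (L.meromorphic_weierstrassP 0)).mp ?_
  rw [L.order_weierstrassP 0 L.lattice.zero_mem]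
  exact WithTop.coe_ne_top

theorem eventually_notMem_lattice : ∀ᶠ z in 𝓝[≠] 0, z ∉ L.lattice := by
  filter_upwards [nhdsWithin_le_nhds (L.compl_lattice_sdiff_singleton_mem_nhds 0),
    self_mem_nhdsWithin] with z hz hz₀ hzL using hz ⟨hzL, hz₀⟩

theorem hasDerivAt_weierstrassP {z : ℂ} (hz : z ∉ L.lattice) :
    HasDerivAt ℘[L] (℘'[L] z) z := by
  rw [← L.deriv_weierstrassP]
  exact (L.analyticOnNhd_weierstrassP z hz).differentiableAt.hasDerivAt

theorem deriv_inv_weierstrassP_sq :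
    (fun z ↦ deriv (℘[L])⁻¹ z * deriv (℘[L])⁻¹ z) =ᶠ[𝓝 0]
      fun z ↦ (invWeierstrassPQuartic L.g₂ L.g₃).eval ((℘[L])⁻¹ z) := by
  have hv := analyticAt_inv_weierstrassP_zero L
  refine (ContinuousAt.eventuallyEq_nhds_iff_eventuallyEq_nhdsNE
    (hv.deriv.fun_mul hv.deriv).continuousAt
    (analyticAt_polynomial_eval hv _).continuousAt).mp ?_
  filter_upwards [eventually_weierstrassP_ne_zero L, eventually_notMem_lattice L] with z hz₀ hzL
  have hODE := L.derivWeierstrassP_sq z hzL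
  rw [((hasDerivAt_weierstrassP L hzL).inv hz₀).deriv]
  simp only [invWeierstrassPQuartic, Pi.inv_apply, eval_sub, eval_mul, eval_pow, eval_X, eval_C,
    eval_ofNat]
  field_simp
  linear_combination hODE

theorem taylorSeries_inv_weierstrassP :
    taylorSeries (℘[L])⁻¹ 0 = invWeierstrassPSeries L.g₂ L.g₃ := by
  have hv := analyticAt_inv_weierstrassP_zero L
  refine eq_invWeierstrassPSeries (fun h ↦ ?_) ?_ ?_
  · have hzero : (℘[L])⁻¹ =ᶠ[𝓝 0] fun _ ↦ 0 :=
      eventuallyEq_of_taylorSeries_eq hv analyticAt_const (by rw [h, taylorSeries_const, map_zero])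
    obtain ⟨z, hz₀, hz⟩ := ((hzero.filter_mono nhdsWithin_le_nhds).and
      (eventually_weierstrassP_ne_zero L)).exists
    exact hz (inv_eq_zero.mp hz₀)
  · simp [coeff_taylorSeries]
  · rw [sq, ← taylorSeries_deriv, ← taylorSeries_mul hv.deriv hv.deriv, ← taylorSeries_eval hv,
      taylorSeries_congr (deriv_inv_weierstrassP_sq L)]

end InvWeierstrassP

section Elliptic

/-- An elliptic function for `Λ`. Its values at poles are unconstrained, except that they
are periodic too. -/
structure IsElliptic (Λ : Submodule ℤ ℂ) (f : ℂ → ℂ) : Prop where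
  meromorphic : Meromorphic f
  periodic : ∀ l ∈ Λ, Function.Periodic f l

namespace IsElliptic

variable {Λ Λ' : Submodule ℤ ℂ} {f g w : ℂ → ℂ}

theorem sub (hf : IsElliptic Λ f) (hg : IsElliptic Λ g) : IsElliptic Λ (f - g) :=
  ⟨hf.meromorphic.sub hg.meromorphic, fun l hl ↦ (hf.periodic l hl).sub (hg.periodic l hl)⟩

theorem mul (hf : IsElliptic Λ f) (hg : IsElliptic Λ g) : IsElliptic Λ (f * g) :=
  ⟨hf.meromorphic.mul hg.meromorphic, fun l hl ↦ (hf.periodic l hl).mul (hg.periodic l hl)⟩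

theorem inv (hf : IsElliptic Λ f) : IsElliptic Λ f⁻¹ :=
  ⟨hf.meromorphic.inv, fun l hl z ↦ congrArg (·⁻¹) (hf.periodic l hl z)⟩

theorem eval (hf : IsElliptic Λ f) (A : ℂ[X]) : IsElliptic Λ fun z ↦ A.eval (f z) where
  meromorphic := by
    have := hf.meromorphic
    simp only [eval_eq_sum_range]
    fun_prop
  periodic l hl := (hf.periodic l hl).comp (A.eval ·)

theorem comp_mul_left {α : ℂ} (hα : ∀ z ∈ Λ, α * z ∈ Λ') (hf : IsElliptic Λ' f) :
    IsElliptic Λ fun z ↦ f (α * z) where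
  meromorphic z := (hf.meromorphic (α * z)).comp_analyticAt (g := fun z ↦ α * z) (by fun_prop)
  periodic l hl z := by simp only [mul_add, hf.periodic _ (hα l hl) (α * z)]

theorem meromorphicOrderAt_add (hf : IsElliptic Λ f) (z : ℂ) {l : ℂ} (hl : l ∈ Λ) :
    meromorphicOrderAt f (z + l) = meromorphicOrderAt f z := by
  rw [← meromorphicOrderAt_comp_add_const_eq_meromorphicOrderAt]
  exact congrArg (meromorphicOrderAt · z) (funext (hf.periodic l hl))

theorem meromorphicOrderAt_of_mem (hf : IsElliptic Λ f) {l : ℂ} (hl : l ∈ Λ) :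
    meromorphicOrderAt f l = meromorphicOrderAt f 0 := by
  simpa using hf.meromorphicOrderAt_add 0 hl

theorem periodic_of_eventuallyEq (hf : IsElliptic Λ f) (hg : Continuous g)
    (h : ∀ z, f =ᶠ[𝓝[≠] z] g) : ∀ l ∈ Λ, Function.Periodic g l := by
  intro l hl z
  have hshift : Tendsto (· + l) (𝓝[≠] z) (𝓝[≠] (z + l)) := Filter.map_add_right_nhdsNE.le
  refine ((ContinuousAt.eventuallyEq_nhds_iff_eventuallyEq_nhdsNE
    (hg.comp (continuous_add_const l)).continuousAt hg.continuousAt).mp ?_).self_of_nhds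
  filter_upwards [hshift.eventually (h (z + l)), h z] with w hwl hw
  rw [Function.comp_apply, ← hwl, ← hw, hf.periodic l hl w]

theorem exists_eventuallyEq_const [DiscreteTopology Λ] [IsZLattice ℝ Λ] (hf : IsElliptic Λ f)
    (hord : ∀ z, 0 ≤ meromorphicOrderAt f z) : ∃ c, ∀ z, f =ᶠ[𝓝[≠] z] fun _ ↦ c := by
  have hf_univ : MeromorphicOn f Set.univ := fun z _ ↦ hf.meromorphic z
  set F := toMeromorphicNFOn f Set.univ
  have hfF (z : ℂ) : f =ᶠ[𝓝[≠] z] F :=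
    (hf_univ.toMeromorphicNFOn_eq_self_on_nhdsNE (Set.mem_univ z)).symm
  have hF : Differentiable ℂ F := fun z ↦ by
    refine ((meromorphicNFOn_toMeromorphicNFOn f Set.univ
      (Set.mem_univ z)).meromorphicOrderAt_nonneg_iff_analyticAt.mp ?_).differentiableAt
    rw [meromorphicOrderAt_toMeromorphicNFOn hf_univ (Set.mem_univ z)]
    exact hord z
  have hrange : IsCompact (Set.range F) := IsZLattice.isCompact_range_of_periodic Λ F hF.continuous
    fun z l hl ↦ hf.periodic_of_eventuallyEq hF.continuous hfF l hl z
  refine ⟨F 0, fun z ↦ (hfF z).trans (.of_eq (funext fun w ↦ ?_))⟩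
  exact hF.apply_eq_apply_of_bounded hrange.isBounded w 0

theorem meromorphicOrderAt_of_mul_eventuallyEq (hf : IsElliptic Λ f) (hg : IsElliptic Λ g)
    (hw : Meromorphic w) (h : f * w =ᶠ[𝓝[≠] 0] g) (hg₀ : meromorphicOrderAt g 0 ≠ ⊤) {l : ℂ}
    (hl : l ∈ Λ) : meromorphicOrderAt w l = meromorphicOrderAt w 0 := by
  have hdiff : Meromorphic (f * w - g) := (hf.meromorphic.mul hw).sub hg.meromorphic
  have hdiff₀ : meromorphicOrderAt (f * w - g) 0 = ⊤ :=
    meromorphicOrderAt_eq_top_iff.mpr (h.mono fun z hz ↦ sub_eq_zero.mpr hz)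
  have hdiffl : meromorphicOrderAt (f * w - g) l = ⊤ := by
    by_contra hne
    exact MeromorphicOn.meromorphicOrderAt_ne_top_of_isPreconnected (U := Set.univ)
      (fun z _ ↦ hdiff z) isPreconnected_univ (Set.mem_univ l) (Set.mem_univ 0) hne hdiff₀
  have hl_eq : f * w =ᶠ[𝓝[≠] l] g :=
    (meromorphicOrderAt_eq_top_iff.mp hdiffl).mono fun z hz ↦ sub_eq_zero.mp hz
  have hf₀ : meromorphicOrderAt f 0 ≠ ⊤ := by
    rw [← meromorphicOrderAt_congr h, meromorphicOrderAt_mul (hf.meromorphic 0) (hw 0)] at hg₀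
    exact (WithTop.add_ne_top.mp hg₀).1
  refine WithTop.add_left_cancel hf₀ ?_
  calc meromorphicOrderAt f 0 + meromorphicOrderAt w l
      = meromorphicOrderAt g l := by
        rw [← meromorphicOrderAt_congr hl_eq, meromorphicOrderAt_mul (hf.meromorphic l) (hw l),
          hf.meromorphicOrderAt_of_mem hl]
    _ = meromorphicOrderAt f 0 + meromorphicOrderAt w 0 := by
        rw [hg.meromorphicOrderAt_of_mem hl, ← meromorphicOrderAt_congr h,
          meromorphicOrderAt_mul (hf.meromorphic 0) (hw 0)]

end IsElliptic

theorem meromorphicOrderAt_ne_of_even_of_odd {f : ℂ → ℂ} (hf : MeromorphicAt f 0)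
    (heven : f.Even) {m : ℤ} (hm : Odd m) : meromorphicOrderAt f 0 ≠ m := by
  intro hfm
  obtain ⟨k, hk, hk₀, hfk⟩ := (meromorphicOrderAt_eq_int_iff hf).mp hfm
  simp only [sub_zero, smul_eq_mul] at hfk
  have hneg : Tendsto (-·) (𝓝[≠] (0 : ℂ)) (𝓝[≠] 0) :=
    (Filter.neg_nhdsNE.trans (by rw [neg_zero])).le
  have hk_odd : (fun z ↦ k (-z)) =ᶠ[𝓝[≠] 0] fun z ↦ -k z := by
    filter_upwards [hfk, hneg.eventually hfk, self_mem_nhdsWithin] with z hz hnz hz₀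
    rw [heven, hz, hm.neg_zpow] at hnz
    exact mul_left_cancel₀ (zpow_ne_zero m hz₀) (by linear_combination hnz)
  have hlim : Tendsto k (𝓝[≠] 0) (𝓝 (k 0)) :=
    hk.continuousAt.tendsto.mono_left nhdsWithin_le_nhds
  have hself : k 0 = -k 0 := tendsto_nhds_unique ((hlim.comp hneg).congr' hk_odd) hlim.neg
  exact hk₀ (self_eq_neg.mp hself)

theorem exists_meromorphicOrderAt_lt_sub_const_mul {f h : ℂ → ℂ} {x : ℂ} (hf : MeromorphicAt f x)
    (hh : MeromorphicAt h x) (htop : meromorphicOrderAt h x ≠ ⊤)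
    (hle : meromorphicOrderAt h x ≤ meromorphicOrderAt f x) :
    ∃ c : ℂ, meromorphicOrderAt h x < meromorphicOrderAt (f - fun z ↦ c * h z) x := by
  have hquot : 0 ≤ meromorphicOrderAt (f / h) x := by
    rw [meromorphicOrderAt_div hf hh]
    lift meromorphicOrderAt h x to ℤ using htop with n
    cases hfx : meromorphicOrderAt f x with
    | top => exact le_top
    | coe m => exact_mod_cast sub_nonneg.mpr (WithTop.coe_le_coe.mp (hfx ▸ hle))
  obtain ⟨c, hc⟩ := tendsto_nhds_of_meromorphicOrderAt_nonneg (hf.div hh) hquot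
  refine ⟨c, ?_⟩
  have hpos : 0 < meromorphicOrderAt (f / h - fun _ ↦ c) x := by
    rw [← tendsto_zero_iff_meromorphicOrderAt_pos ((hf.div hh).sub (.const c x))]
    exact sub_self c ▸ hc.sub_const c
  have hfact : f - (fun z ↦ c * h z) =ᶠ[𝓝[≠] x] h * (f / h - fun _ ↦ c) := by
    filter_upwards [(meromorphicOrderAt_ne_top_iff_eventually_ne_zero hh).mp htop] with z hz
    simp only [Pi.sub_apply, Pi.mul_apply, Pi.div_apply]
    field_simp
  rw [meromorphicOrderAt_congr hfact,
    meromorphicOrderAt_mul hh ((hf.div hh).sub (.const c x))]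
  simpa using WithTop.add_lt_add_left htop hpos

end Elliptic

section WeierstrassP

variable {L : PeriodPair} {f : ℂ → ℂ}

theorem isElliptic_weierstrassP (L : PeriodPair) : IsElliptic L.lattice ℘[L] :=
  ⟨L.meromorphic_weierstrassP, fun l hl z ↦ L.weierstrassP_add_coe z ⟨l, hl⟩⟩

theorem meromorphicOrderAt_weierstrassP_pow_zero (L : PeriodPair) (n : ℕ) :
    meromorphicOrderAt (℘[L] ^ n) 0 = ((-2 * n : ℤ) : WithTop ℤ) := by
  rw [meromorphicOrderAt_pow (L.meromorphic_weierstrassP 0),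
    L.order_weierstrassP 0 L.lattice.zero_mem, mul_comm]
  rfl

-- A multiple of `℘ ^ (n + 1)` cancels the leading term; by parity the order then rises by two.
theorem IsElliptic.exists_le_meromorphicOrderAt_sub_of_even {n : ℕ} (hf : IsElliptic L.lattice f)
    (heven : f.Even) (hzero : ((-2 * (n + 1 : ℕ) : ℤ) : WithTop ℤ) ≤ meromorphicOrderAt f 0) :
    ∃ A : ℂ[X], ((-2 * n : ℤ) : WithTop ℤ) ≤
      meromorphicOrderAt (f - fun z ↦ A.eval (℘[L] z)) 0 := by
  have hpow := meromorphicOrderAt_weierstrassP_pow_zero L (n + 1)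
  obtain ⟨c, hc⟩ := exists_meromorphicOrderAt_lt_sub_const_mul (hf.meromorphic 0)
    ((L.meromorphic_weierstrassP 0).pow (n + 1)) (hpow ▸ WithTop.coe_ne_top) (hpow ▸ hzero)
  have hA : (fun z ↦ c * (℘[L] ^ (n + 1)) z) = fun z ↦ (C c * X ^ (n + 1)).eval (℘[L] z) := by
    simp
  rw [hA, hpow] at hc
  refine ⟨C c * X ^ (n + 1), ?_⟩
  set g := f - fun z ↦ (C c * X ^ (n + 1)).eval (℘[L] z) with hg
  have hg_even : g.Even := fun z ↦ by simp only [hg, Pi.sub_apply, heven z, L.weierstrassP_neg]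
  have hodd := meromorphicOrderAt_ne_of_even_of_odd
    ((hf.sub ((isElliptic_weierstrassP L).eval _)).meromorphic 0) hg_even
    (m := -2 * n - 1) ⟨-n - 1, by ring⟩
  rw [← hg] at hodd
  cases hg₀ : meromorphicOrderAt g 0 with
  | top => exact le_top
  | coe m =>
    rw [hg₀] at hc hodd
    norm_cast at hc hodd ⊢
    lia

theorem IsElliptic.exists_eventuallyEq_eval_of_even {n : ℕ} (hf : IsElliptic L.lattice f)
    (heven : f.Even) (hord : ∀ z ∉ L.lattice, 0 ≤ meromorphicOrderAt f z)
    (hzero : ((-2 * n : ℤ) : WithTop ℤ) ≤ meromorphicOrderAt f 0) :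
    ∃ A : ℂ[X], f =ᶠ[𝓝[≠] 0] fun z ↦ A.eval (℘[L] z) := by
  induction n generalizing f with
  | zero =>
    obtain ⟨c, hc⟩ := hf.exists_eventuallyEq_const fun z ↦ by
      by_cases hz : z ∈ L.lattice
      · rw [hf.meromorphicOrderAt_of_mem hz]
        exact hzero
      · exact hord z hz
    exact ⟨C c, by simpa only [eval_C] using hc 0⟩
  | succ n ih =>
    obtain ⟨A, hA⟩ := hf.exists_le_meromorphicOrderAt_sub_of_even heven hzero
    have hg_even : (f - fun z ↦ A.eval (℘[L] z)).Even := fun z ↦ by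
      simp only [Pi.sub_apply, heven z, L.weierstrassP_neg]
    have hg_ord (z : ℂ) (hz : z ∉ L.lattice) :
        0 ≤ meromorphicOrderAt (f - fun z ↦ A.eval (℘[L] z)) z := by
      have hA_an := analyticAt_polynomial_eval (L.analyticOnNhd_weierstrassP z hz) A
      rw [sub_eq_add_neg]
      exact (le_min (hord z hz) hA_an.neg.meromorphicOrderAt_nonneg).trans
        (_root_.meromorphicOrderAt_add (hf.meromorphic z) hA_an.neg.meromorphicAt)
    obtain ⟨B, hB⟩ := ih (hf.sub ((isElliptic_weierstrassP L).eval A)) hg_even hg_ord hA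
    refine ⟨B + A, hB.mono fun z hz ↦ ?_⟩
    simpa only [eval_add] using sub_eq_iff_eq_add.mp hz

theorem le_analyticOrderAt_eval_of_dvd {P : ℂ[X]} {z : ℂ} {m : ℕ} (hf : AnalyticAt ℂ f z)
    (hdvd : (X - C (f z)) ^ m ∣ P) : m ≤ analyticOrderAt (fun w ↦ P.eval (f w)) z := by
  obtain ⟨Q, rfl⟩ := hdvd
  have hlin : AnalyticAt ℂ (fun w ↦ f w - f z) z := hf.fun_sub analyticAt_const
  have hlin_ord : 1 ≤ analyticOrderAt (fun w ↦ f w - f z) z := by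
    rw [Order.one_le_iff_ne_zero, hlin.analyticOrderAt_ne_zero, sub_self]
  have hfactor : (fun w ↦ ((X - C (f z)) ^ m * Q).eval (f w)) =
      (fun w ↦ f w - f z) ^ m * fun w ↦ Q.eval (f w) := by
    ext w
    simp
  rw [hfactor, analyticOrderAt_mul (hlin.pow m) (analyticAt_polynomial_eval hf Q),
    analyticOrderAt_pow hlin, nsmul_eq_mul]
  exact (le_mul_of_one_le_right' hlin_ord).trans le_self_add

theorem meromorphicOrderAt_eval_mul_nonneg {g : ℂ → ℂ} {P : ℂ[X]} {z : ℂ}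
    (hf : AnalyticAt ℂ f z) (hg : MeromorphicAt g z)
    (hdvd : (X - C (f z)) ^ (meromorphicOrderAt g z).untop₀.natAbs ∣ P) :
    0 ≤ meromorphicOrderAt ((fun w ↦ P.eval (f w)) * g) z := by
  have hP := analyticAt_polynomial_eval hf P
  have hle := le_analyticOrderAt_eval_of_dvd hf hdvd
  rw [meromorphicOrderAt_mul hP.meromorphicAt hg, hP.meromorphicOrderAt_eq]
  cases hg_ord : meromorphicOrderAt g z with
  | top => simp
  | coe n =>
    cases hP_ord : analyticOrderAt (fun w ↦ P.eval (f w)) z with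
    | top => exact le_top
    | coe k =>
      rw [hg_ord, hP_ord, WithTop.untop₀_coe, Nat.cast_le] at hle
      exact WithTop.coe_le_coe.mpr (by lia)

theorem sub_fract_mem_lattice (L : PeriodPair) (z : ℂ) :
    z - ZSpan.fract L.basis z ∈ L.lattice := by
  rw [ZSpan.fract_apply, sub_sub_cancel, L.lattice_eq_span_range_basis]
  exact (ZSpan.floor L.basis z).2

theorem IsElliptic.exists_polynomial_eval_mul_nonneg (hf : IsElliptic L.lattice f) :
    ∃ P : ℂ[X], P ≠ 0 ∧
      ∀ z ∉ L.lattice, 0 ≤ meromorphicOrderAt ((fun w ↦ P.eval (℘[L] w)) * f) z := by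
  set K := closure (ZSpan.fundamentalDomain L.basis)
  set D := MeromorphicOn.divisor f K
  have hD : D.support.Finite :=
    D.finiteSupport (ZSpan.fundamentalDomain_isBounded L.basis).isCompact_closure
  set P : ℂ[X] := ∏ t ∈ hD.toFinset, (X - C (℘[L] t)) ^ (D t).natAbs
  refine ⟨P, Finset.prod_ne_zero_iff.mpr fun t _ ↦ pow_ne_zero _ (X_sub_C_ne_zero _),
    fun z hz ↦ ?_⟩
  set t := ZSpan.fract L.basis z
  have hzt : z - t ∈ L.lattice := sub_fract_mem_lattice L z
  have htL : t ∉ L.lattice := fun h ↦ hz (by simpa using add_mem h hzt)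
  have hDt : D t = (meromorphicOrderAt f t).untop₀ := MeromorphicOn.divisor_apply
    (fun z _ ↦ hf.meromorphic z) (subset_closure (ZSpan.fract_mem_fundamentalDomain _ _))
  have hdvd : (X - C (℘[L] t)) ^ (D t).natAbs ∣ P := by
    by_cases htD : t ∈ D.support
    · exact Finset.dvd_prod_of_mem _ (hD.mem_toFinset.mpr htD)
    · simp [Function.notMem_support.mp htD]
  have hmul := (((isElliptic_weierstrassP L).eval P).mul hf).meromorphicOrderAt_add t hzt
  rw [add_sub_cancel] at hmul
  rw [hmul]
  exact meromorphicOrderAt_eval_mul_nonneg (L.analyticOnNhd_weierstrassP t htL)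
    (hf.meromorphic t) (hDt ▸ hdvd)

theorem IsElliptic.exists_polynomial_mul_eventuallyEq_of_even (hf : IsElliptic L.lattice f)
    (heven : f.Even) : ∃ A B : ℂ[X], A ≠ 0 ∧
      (fun z ↦ A.eval (℘[L] z)) * f =ᶠ[𝓝[≠] 0] fun z ↦ B.eval (℘[L] z) := by
  obtain ⟨A, hA, hord⟩ := hf.exists_polynomial_eval_mul_nonneg
  set g := (fun z ↦ A.eval (℘[L] z)) * f with hg
  have hg_even : g.Even := fun z ↦ by simp only [hg, Pi.mul_apply, heven z, L.weierstrassP_neg]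
  obtain ⟨n, hn⟩ : ∃ n : ℕ, ((-2 * n : ℤ) : WithTop ℤ) ≤ meromorphicOrderAt g 0 := by
    cases meromorphicOrderAt g 0 with
    | top => exact ⟨0, le_top⟩
    | coe m => exact ⟨m.natAbs, WithTop.coe_le_coe.mpr (by lia)⟩
  obtain ⟨B, hB⟩ := (((isElliptic_weierstrassP L).eval A).mul hf).exists_eventuallyEq_eval_of_even
    hg_even hord hn
  exact ⟨A, B, hA, hB⟩

end WeierstrassP

section Criterion

variable {L L' : PeriodPair} {β : ℂ}

theorem isNonzeroRationalIn_taylorSeries_iff {f g : ℂ → ℂ} {x : ℂ} (hf : AnalyticAt ℂ f x)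
    (hg : AnalyticAt ℂ g x) :
    IsNonzeroRationalIn (taylorSeries f x) (taylorSeries g x) ↔
      ∃ A B : ℂ[X], B ≠ 0 ∧
        (fun z ↦ A.eval (f z)) * g =ᶠ[𝓝[≠] x] fun z ↦ B.eval (f z) := by
  refine exists₂_congr fun A B ↦ and_congr_right fun _ ↦ ?_
  have hA := analyticAt_polynomial_eval hf A
  have hB := analyticAt_polynomial_eval hf B
  rw [ContinuousAt.eventuallyEq_nhds_iff_eventuallyEq_nhdsNE (hA.mul hg).continuousAt
    hB.continuousAt, ← taylorSeries_eval hf, ← taylorSeries_eval hf, ← taylorSeries_mul hA hg]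
  exact ⟨eventuallyEq_of_taylorSeries_eq (hA.mul hg) hB, taylorSeries_congr⟩

theorem eval_inv_reflect {F : Type*} [Field F] {A : F[X]} {N : ℕ} (hA : A.natDegree ≤ N) {x : F}
    (hx : x ≠ 0) :
    (A.reflect N).eval x⁻¹ = (x ^ N)⁻¹ * A.eval x := by
  let := invertibleOfNonzero hx
  have h := eval₂_reflect_mul_pow (RingHom.id F) x N A hA
  rw [invOf_eq_inv] at h
  rw [eq_inv_mul_iff_mul_eq₀ (pow_ne_zero N hx), mul_comm]
  exact h

theorem meromorphicOrderAt_weierstrassP_comp_mul (hβ : β ≠ 0) (z : ℂ) :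
    meromorphicOrderAt (fun w ↦ ℘[L] (β * w)) z = meromorphicOrderAt ℘[L] (β * z) :=
  meromorphicOrderAt_comp_of_deriv_ne_zero (f := ℘[L]) (g := fun w ↦ β * w) (x := z)
    (by fun_prop) (by simpa using hβ)

theorem eventually_eval_inv_weierstrassP_ne_zero (L : PeriodPair) {B : ℂ[X]} (hB : B ≠ 0) :
    ∀ᶠ z in 𝓝[≠] 0, B.eval ((℘[L])⁻¹ z) ≠ 0 := by
  have hlim : Tendsto (℘[L])⁻¹ (𝓝[≠] 0) (𝓝[≠] 0) := by
    refine tendsto_nhdsWithin_iff.mpr ⟨?_, ?_⟩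
    · refine tendsto_zero_of_meromorphicOrderAt_pos ?_
      rw [meromorphicOrderAt_inv_weierstrassP_zero]
      exact two_pos
    · exact (eventually_weierstrassP_ne_zero L).mono fun z hz ↦ inv_ne_zero hz
  exact hlim.eventually (nhdsNE_le_cofinite 0 (finite_setOfPred_isRoot hB).compl_mem_cofinite)

theorem mul_mem_lattice_of_eval_mul_eventuallyEq (hβ : β ≠ 0) {A B : ℂ[X]} (hB : B ≠ 0)
    (h : (fun z ↦ A.eval ((℘[L])⁻¹ z)) * (fun z ↦ (℘[L'])⁻¹ (β * z)) =ᶠ[𝓝[≠] 0]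
      fun z ↦ B.eval ((℘[L])⁻¹ z)) {l : ℂ} (hl : l ∈ L.lattice) : β * l ∈ L'.lattice := by
  have hV := (isElliptic_weierstrassP L).inv
  have hBV : meromorphicOrderAt (fun z ↦ B.eval ((℘[L])⁻¹ z)) 0 ≠ ⊤ :=
    (meromorphicOrderAt_ne_top_iff_eventually_ne_zero ((hV.eval B).meromorphic 0)).mpr
      (eventually_eval_inv_weierstrassP_ne_zero L hB)
  have hW : Meromorphic fun z ↦ ℘[L'] (β * z) := fun z ↦
    (L'.meromorphic_weierstrassP (β * z)).comp_analyticAt (g := fun z ↦ β * z) (by fun_prop)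
  have hord := (hV.eval A).meromorphicOrderAt_of_mul_eventuallyEq (hV.eval B) hW.inv h hBV hl
  rw [meromorphicOrderAt_inv, meromorphicOrderAt_inv, neg_inj,
    meromorphicOrderAt_weierstrassP_comp_mul hβ, meromorphicOrderAt_weierstrassP_comp_mul hβ,
    mul_zero, L'.order_weierstrassP 0 L'.lattice.zero_mem] at hord
  by_contra hβl
  have hnonneg := (L'.analyticOnNhd_weierstrassP (β * l) hβl).meromorphicOrderAt_nonneg
  rw [hord] at hnonneg
  exact absurd hnonneg (by decide)

theorem exists_eval_mul_eventuallyEq_of_mul_mem_lattice (hβ : β ≠ 0)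
    (hsub : ∀ l ∈ L.lattice, β * l ∈ L'.lattice) :
    ∃ A B : ℂ[X], B ≠ 0 ∧
      (fun z ↦ A.eval ((℘[L])⁻¹ z)) * (fun z ↦ (℘[L'])⁻¹ (β * z)) =ᶠ[𝓝[≠] 0]
        fun z ↦ B.eval ((℘[L])⁻¹ z) := by
  have hw := (isElliptic_weierstrassP L').comp_mul_left hsub
  have hw_ne : ∀ᶠ z in 𝓝[≠] 0, ℘[L'] (β * z) ≠ 0 := by
    refine (meromorphicOrderAt_ne_top_iff_eventually_ne_zero (hw.meromorphic 0)).mp ?_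
    rw [meromorphicOrderAt_weierstrassP_comp_mul hβ, mul_zero,
      L'.order_weierstrassP 0 L'.lattice.zero_mem]
    exact WithTop.coe_ne_top
  obtain ⟨A, B, hA, hAB⟩ := hw.exists_polynomial_mul_eventuallyEq_of_even fun z ↦ by
    rw [mul_neg, L'.weierstrassP_neg]
  set N := max A.natDegree B.natDegree
  refine ⟨B.reflect N, A.reflect N, mt reflect_eq_zero_iff.mp hA, ?_⟩
  filter_upwards [hAB, eventually_weierstrassP_ne_zero L, hw_ne] with z hz hz₀ hwz₀
  simp only [Pi.mul_apply, Pi.inv_apply] at hz ⊢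
  rw [eval_inv_reflect (le_max_left _ _) hz₀, eval_inv_reflect (le_max_right _ _) hz₀, ← hz]
  field_simp

theorem forall_mul_mem_lattice_iff_isNonzeroRationalIn (hβ : β ≠ 0) :
    (∀ l ∈ L.lattice, β * l ∈ L'.lattice) ↔
      IsNonzeroRationalIn (invWeierstrassPSeries L.g₂ L.g₃)
        (PowerSeries.rescale β (invWeierstrassPSeries L'.g₂ L'.g₃)) := by
  have hW : AnalyticAt ℂ (fun z ↦ (℘[L'])⁻¹ (β * z)) 0 :=
    AnalyticAt.fun_comp (f := fun z ↦ β * z)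
      (by simpa using analyticAt_inv_weierstrassP_zero L') (by fun_prop)
  rw [← taylorSeries_inv_weierstrassP, ← taylorSeries_inv_weierstrassP,
    ← taylorSeries_comp_mul_left,
    isNonzeroRationalIn_taylorSeries_iff (analyticAt_inv_weierstrassP_zero L) hW]
  exact ⟨exists_eval_mul_eventuallyEq_of_mul_mem_lattice hβ, fun ⟨_, _, hB, hAB⟩ _ hl ↦
    mul_mem_lattice_of_eval_mul_eventuallyEq hβ hB hAB hl⟩

end Criterion

section Lattice

theorem exists_periodPair_lattice_eq (Λ : AddSubgroup ℂ) [DiscreteTopology Λ]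
    (hspan : Submodule.span ℝ (Λ : Set ℂ) = ⊤) :
    ∃ L : PeriodPair, L.lattice.toAddSubgroup = Λ := by
  let S : Submodule ℤ ℂ := Λ.toIntSubmodule
  have : DiscreteTopology S := ‹DiscreteTopology Λ›
  have : IsZLattice ℝ S := ⟨hspan⟩
  have : Module.Free ℤ S := ZLattice.module_free ℝ S
  have : Module.Finite ℤ S := ZLattice.module_finite ℝ S
  have hrank : Module.finrank ℤ S = 2 := by
    rw [ZLattice.rank ℝ S, Complex.finrank_real_complex]
  let b : Module.Basis (Fin 2) ℤ S := Module.finBasisOfFinrankEq ℤ S hrank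
  have hb : ![(b 0 : ℂ), b 1] = b.ofZLatticeBasis ℝ S := by
    ext k
    fin_cases k <;> simp
  refine ⟨⟨b 0, b 1, hb ▸ (b.ofZLatticeBasis ℝ S).linearIndependent⟩, ?_⟩
  have hS : Submodule.span ℤ {(b 0 : ℂ), (b 1 : ℂ)} = S := by
    rw [← Matrix.range_cons_cons_empty, hb, b.ofZLatticeBasis_span ℝ S]
  exact congrArg Submodule.toAddSubgroup hS

theorem tsum_inv_pow_eq_G (L : PeriodPair) {n : ℕ} (hn : n ≠ 0) :
    ∑' w : {w : ℂ // w ∈ L.lattice.toAddSubgroup ∧ w ≠ 0}, ((w : ℂ) ^ n)⁻¹ = L.G n := by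
  refine (tsum_eq_tsum_of_ne_zero_bij (fun w ↦ ⟨w.1.1, w.1.2.1⟩) ?_ ?_ fun _ ↦ rfl).symm
  · exact fun v w hvw ↦ Subtype.ext (Subtype.ext (by simpa using hvw))
  · intro w hw
    have hw₀ : (w : ℂ) ≠ 0 := fun h ↦ hw (by simp [h, hn])
    exact ⟨⟨⟨w, w.2, hw₀⟩, hw⟩, rfl⟩

theorem g₂_lattice (L : PeriodPair) : g₂ L.lattice.toAddSubgroup = L.g₂ := by
  rw [g₂, tsum_inv_pow_eq_G L four_ne_zero, PeriodPair.g₂]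

theorem g₃_lattice (L : PeriodPair) : g₃ L.lattice.toAddSubgroup = L.g₃ := by
  rw [g₃, tsum_inv_pow_eq_G L (by decide), PeriodPair.g₃]

end Lattice

theorem map_rescale_invWeierstrassPSeries {F E : Type*} [Field F] [CharZero F] [Field E]
    (i : F →+* E) (c a b : F) :
    PowerSeries.map i (PowerSeries.rescale c (invWeierstrassPSeries a b)) =
      PowerSeries.rescale (i c) (invWeierstrassPSeries (i a) (i b)) := by
  rw [← map_invWeierstrassPSeries]
  ext n
  simp only [PowerSeries.coeff_map, PowerSeries.coeff_rescale, map_mul, map_pow]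

theorem forall_mul_mem_lattice_iff_of_field {F : Type*} [Field F] (i : F →+* ℂ)
    {L L' : PeriodPair} {a b a' b' α : F} (hα : α ≠ 0) (ha : L.g₂ = i a) (hb : L.g₃ = i b)
    (ha' : L'.g₂ = i a') (hb' : L'.g₃ = i b') :
    (∀ l ∈ L.lattice, i α * l ∈ L'.lattice) ↔
      IsNonzeroRationalIn (invWeierstrassPSeries a b)
        (PowerSeries.rescale α (invWeierstrassPSeries a' b')) := by
  have := i.charZero
  rw [forall_mul_mem_lattice_iff_isNonzeroRationalIn ((map_ne_zero i).mpr hα), ha, hb, ha', hb',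
    ← map_invWeierstrassPSeries, ← map_rescale_invWeierstrassPSeries]
  exact ⟨fun h ↦ h.of_map i, fun h ↦ h.map i⟩

theorem stmt_4_general {F : Type*} [Field F] (i j : F →+* ℂ) (Λ Λ' M M' : AddSubgroup ℂ)
    [DiscreteTopology Λ] [DiscreteTopology Λ'] [DiscreteTopology M] [DiscreteTopology M']
    (hspanΛ : Submodule.span ℝ (Λ : Set ℂ) = ⊤) (hspanΛ' : Submodule.span ℝ (Λ' : Set ℂ) = ⊤)
    (hspanM : Submodule.span ℝ (M : Set ℂ) = ⊤) (hspanM' : Submodule.span ℝ (M' : Set ℂ) = ⊤)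
    {a b a' b' α : F} (hΛ₂ : g₂ Λ = i a) (hΛ₃ : g₃ Λ = i b) (hΛ'₂ : g₂ Λ' = i a')
    (hΛ'₃ : g₃ Λ' = i b') (hM₂ : g₂ M = j a) (hM₃ : g₃ M = j b) (hM'₂ : g₂ M' = j a')
    (hM'₃ : g₃ M' = j b') (hsub : ∀ z ∈ Λ, i α * z ∈ Λ') : ∀ m ∈ M, j α * m ∈ M' := by
  rcases eq_or_ne α 0 with rfl | hα
  · simp
  obtain ⟨L, rfl⟩ := exists_periodPair_lattice_eq Λ hspanΛ
  obtain ⟨L', rfl⟩ := exists_periodPair_lattice_eq Λ' hspanΛ'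
  obtain ⟨P, rfl⟩ := exists_periodPair_lattice_eq M hspanM
  obtain ⟨P', rfl⟩ := exists_periodPair_lattice_eq M' hspanM'
  rw [g₂_lattice] at hΛ₂ hΛ'₂ hM₂ hM'₂
  rw [g₃_lattice] at hΛ₃ hΛ'₃ hM₃ hM'₃
  exact (forall_mul_mem_lattice_iff_of_field j hα hM₂ hM₃ hM'₂ hM'₃).mpr
    ((forall_mul_mem_lattice_iff_of_field i hα hΛ₂ hΛ₃ hΛ'₂ hΛ'₃).mp hsub)

/-- Let `Λ, Λ'` be CM lattices (CM by `R = τ(𝓞 K)`) with algebraic `g₂, g₃`,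
let `α ≠ 0` be algebraic with `α·Λ ⊆ Λ'`, let `σ` be a field automorphism of the field `ℚ̄` of
algebraic numbers (the integral closure of `ℚ` in `ℂ`), and let `M, M'` be lattices whose
Eisenstein series are the `σ`-conjugates of those of `Λ, Λ'`.  Then `σ(α)·M ⊆ M'`. -/
theorem stmt_4
    (K : Type*) [Field K] [NumberField K]
    (hdeg : Module.finrank ℚ K = 2)
    (hcplx : IsEmpty (K →+* ℝ))
    (τ : K →+* ℂ)
    (σ : integralClosure ℚ ℂ ≃+* integralClosure ℚ ℂ)
    (Λ Λ' M M' : AddSubgroup ℂ)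
    (hdiscΛ : DiscreteTopology Λ) (hdiscΛ' : DiscreteTopology Λ')
    (hdiscM : DiscreteTopology M) (hdiscM' : DiscreteTopology M')
    (hspanΛ : Submodule.span ℝ (Λ : Set ℂ) = ⊤)
    (hspanΛ' : Submodule.span ℝ (Λ' : Set ℂ) = ⊤)
    (hspanM : Submodule.span ℝ (M : Set ℂ) = ⊤)
    (hspanM' : Submodule.span ℝ (M' : Set ℂ) = ⊤)
    (hCM : {z : ℂ | ∀ w ∈ Λ, z * w ∈ Λ} =
      Set.range fun a : 𝓞 K => τ (algebraMap (𝓞 K) K a))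
    (hCM' : {z : ℂ | ∀ w ∈ Λ', z * w ∈ Λ'} =
      Set.range fun a : 𝓞 K => τ (algebraMap (𝓞 K) K a))
    (h2Λ : g₂ Λ ∈ integralClosure ℚ ℂ) (h3Λ : g₃ Λ ∈ integralClosure ℚ ℂ)
    (h2Λ' : g₂ Λ' ∈ integralClosure ℚ ℂ) (h3Λ' : g₃ Λ' ∈ integralClosure ℚ ℂ)
    (α : ℂ) (hα0 : α ≠ 0) (hαalg : α ∈ integralClosure ℚ ℂ)
    (hsub : ∀ z ∈ Λ, α * z ∈ Λ')
    (hM2 : g₂ M = (σ ⟨g₂ Λ, h2Λ⟩ : ℂ)) (hM3 : g₃ M = (σ ⟨g₃ Λ, h3Λ⟩ : ℂ))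
    (hM'2 : g₂ M' = (σ ⟨g₂ Λ', h2Λ'⟩ : ℂ)) (hM'3 : g₃ M' = (σ ⟨g₃ Λ', h3Λ'⟩ : ℂ)) :
    ∀ m ∈ M, (σ ⟨α, hαalg⟩ : ℂ) * m ∈ M' := by
  let : Field (integralClosure ℚ ℂ) :=
    (isField_of_isIntegral_of_isField' (Field.toIsField ℚ)).toField
  exact stmt_4_general (algebraMap (integralClosure ℚ ℂ) ℂ)
    ((algebraMap (integralClosure ℚ ℂ) ℂ).comp σ.toRingHom) Λ Λ' M M' hspanΛ hspanΛ' hspanM hspanM'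
    (a := ⟨g₂ Λ, h2Λ⟩) (b := ⟨g₃ Λ, h3Λ⟩) (a' := ⟨g₂ Λ', h2Λ'⟩) (b' := ⟨g₃ Λ', h3Λ'⟩)
    (α := ⟨α, hαalg⟩) rfl rfl rfl rfl hM2 hM3 hM'2 hM'3 hsub
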